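/- arXiv:2110.14592 — 2 statements merged into one kernel-verified Lean document; each statement's English description precedes it below -/
import Mathlib

section
/- Assume the bounded distortion hypothesis holds for (G, ℓ), with constant c > 0 and finite set B ⊆ G. Let F ⊆ G be a subset and ν a probability measure on G with ν(F) = 1. Then there exist a sequence (σ_i)_{i≥1} of elements of B and, for every integer k ≥ 2, a subset E_k ⊆ F^k such that: (1) for every (g₁,…,g_k) ∈ E_k, ℓ(g₁σ₁g₂σ₂⋯g_{k−1}σ_{k−1}g_k) ≥ ℓ(g₁) + ℓ(g₂) + ⋯ + ℓ(g_k) − (k−1)c; and (2) ν^k(E_k) ≥ |B|^{−(k−1)}, where ν^k denotes the k-fold product measure of ν on G^k. -/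
/-!
Let `A n σ` be the set of `g ∈ F^{n+1}` along which the length of the alternating product is
almost additive. The sequence `σ` is built greedily. For `g ∈ A n σ` and `h ∈ F`, bounded
distortion applied to `x = g₁σ₁⋯σₙg_{n+1}` and `y = h` yields some `s ∈ B` with
`(g, h) ∈ A (n + 1) τ`, where `τ` is `σ` with entry `n + 1` replaced by `s`. Hence
`A n σ × F`, whose measure is that of `A n σ`, is covered by `|B|` sets, and for one choice of
`s` the corresponding set has at least `1 / |B|` of that measure (`exists_step`). As `A n σ`
only depends on `σ₁, …, σₙ` (`goodSet_congr`), the successive choices assemble into a single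
sequence.
-/

open MeasureTheory Filter Topology ProbabilityTheory
open scoped ENNReal

/-- The alternating product `g₁ σᵢ g₂ σ_{i+1} ⋯ σ_{i+k-2} g_k` of a list `[g₁, …, g_k]`,
interleaving the elements of the sequence `σ` starting from index `i`. -/
noncomputable def altProdFrom {G : Type*} [Group G] (σ : ℕ → G) : ℕ → List G → G
  | _, [] => 1
  | _, [g] => g
  | i, g :: g' :: gs => g * σ i * altProdFrom σ (i + 1) (g' :: gs)

lemma altProdFrom_append_singleton {G : Type*} [Group G] (σ : ℕ → G) (h : G) (l : List G) :
    ∀ (a : G) (i : ℕ), altProdFrom σ i ((a :: l) ++ [h])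
      = altProdFrom σ i (a :: l) * σ (i + l.length) * h := by
  induction l with
  | nil => intro a i; simp [altProdFrom]
  | cons b l ih =>
    intro a i
    have := ih b (i + 1)
    simp only [List.cons_append] at this
    simp only [List.cons_append, altProdFrom, this, List.length_cons]
    rw [show i + 1 + l.length = i + (l.length + 1) by omega]
    simp only [mul_assoc]

lemma altProdFrom_congr {G : Type*} [Group G] (σ τ : ℕ → G) (l : List G) :
    ∀ (a : G) (i : ℕ), (∀ j, i ≤ j → j < i + l.length → σ j = τ j) →
      altProdFrom σ i (a :: l) = altProdFrom τ i (a :: l) := by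
  induction l with
  | nil => intro a i _; simp [altProdFrom]
  | cons b l ih =>
    intro a i hj
    simp only [List.length_cons] at hj
    simp only [altProdFrom]
    rw [hj i le_rfl (by omega), ih b (i + 1) fun j h1 h2 => hj j (by omega) (by omega)]

/-- The tuples in `F^{n+1}` along which `ℓ` is almost additive with total loss at most `n * c`.
The number of entries is written `n + 1` so that the tuples are nonempty. -/
def goodSet {G : Type*} [Group G] (ℓ : G → ℕ) (c : ℝ) (F : Set G) (n : ℕ) (σ : ℕ → G) :
    Set (Fin (n + 1) → G) :=
  {g | (∀ i, g i ∈ F) ∧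
    (∑ i, (ℓ (g i) : ℝ)) - n * c ≤ (ℓ (altProdFrom σ 1 (List.ofFn g)) : ℝ)}

lemma goodSet_congr {G : Type*} [Group G] (ℓ : G → ℕ) (c : ℝ) (F : Set G) (n : ℕ) (σ τ : ℕ → G)
    (h : ∀ j, j ≤ n → σ j = τ j) : goodSet ℓ c F n σ = goodSet ℓ c F n τ := by
  ext g
  simp only [goodSet, Set.mem_ofPred_eq, List.ofFn_succ]
  rw [altProdFrom_congr σ τ _ _ 1]
  intro j _ h2
  rw [List.length_ofFn] at h2
  exact h j (by omega)

/-- The greedy choice of the next element of the sequence, by pigeonhole over `B`. -/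
lemma exists_step {G : Type*} [Group G] [Countable G] [MeasurableSpace G]
    [MeasurableSingletonClass G] (ℓ : G → ℕ) (c : ℝ) (B : Finset G)
    (hdist : ∀ x y : G, ∃ σ ∈ B, (ℓ x : ℝ) + (ℓ y : ℝ) - c ≤ (ℓ (x * σ * y) : ℝ))
    (F : Set G) (ν : Measure G) [IsProbabilityMeasure ν] (hνF : ν F = 1)
    (n : ℕ) (σ : ℕ → G) :
    ∃ s ∈ B, (B.card : ℝ≥0∞)⁻¹ * Measure.pi (fun _ : Fin (n + 1) => ν) (goodSet ℓ c F n σ)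
      ≤ Measure.pi (fun _ : Fin (n + 2) => ν)
          (goodSet ℓ c F (n + 1) (Function.update σ (n + 1) s)) := by
  have hB : B.Nonempty := by
    obtain ⟨s, hs, _⟩ := hdist 1 1
    exact ⟨s, hs⟩
  let μ := Measure.pi (fun _ : Fin (n + 2) => ν)
  let S : Set (Fin (n + 2) → G) := {g | g (Fin.last _) ∈ F ∧ Fin.init g ∈ goodSet ℓ c F n σ}
  have hS : μ S = Measure.pi (fun _ : Fin (n + 1) => ν) (goodSet ℓ c F n σ) := by
    have hmp := measurePreserving_piFinSuccAbove (fun _ : Fin (n + 2) => ν) (Fin.last _)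
    have := hmp.measure_preimage_equiv (F ×ˢ goodSet ℓ c F n σ)
    rw [Measure.prod_prod, hνF, one_mul] at this
    rw [← this]
    congr 1
    ext g
    simp [S, MeasurableEquiv.piFinSuccAbove, Fin.insertNthEquiv, Set.mem_prod]
  have hcover : S ⊆ ⋃ s ∈ B, goodSet ℓ c F (n + 1) (Function.update σ (n + 1) s) := by
    rintro g ⟨hgl, hgF, hg⟩
    obtain ⟨s, hs, hle⟩ := hdist (altProdFrom σ 1 (List.ofFn (Fin.init g))) (g (Fin.last _))
    refine Set.mem_biUnion hs ⟨fun i => ?_, ?_⟩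
    · refine Fin.lastCases hgl (fun i => hgF i) i
    · have hcat : List.ofFn g = List.ofFn (Fin.init g) ++ [g (Fin.last _)] := by
        rw [List.ofFn_succ_last]; rfl
      have hprod : altProdFrom (Function.update σ (n + 1) s) 1 (List.ofFn g)
          = altProdFrom σ 1 (List.ofFn (Fin.init g)) * s * g (Fin.last _) := by
        rw [hcat, List.ofFn_succ (f := Fin.init g), altProdFrom_append_singleton,
          altProdFrom_congr (Function.update σ (n + 1) s) σ]
        · rw [List.length_ofFn, add_comm 1 n, Function.update_self]
        · intro j _ hj
          rw [List.length_ofFn] at hj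
          exact Function.update_of_ne (by omega) _ _
      rw [hprod, Fin.sum_univ_castSucc]
      simp only [Fin.init] at hg hle ⊢
      push_cast
      linarith
  obtain ⟨s, hs, hmax⟩ := B.exists_max_image
    (fun s => μ (goodSet ℓ c F (n + 1) (Function.update σ (n + 1) s))) hB
  refine ⟨s, hs, ?_⟩
  rw [← hS, mul_comm, ← div_eq_mul_inv]
  refine ENNReal.div_le_of_le_mul' ?_
  calc μ S ≤ ∑ s ∈ B, μ (goodSet ℓ c F (n + 1) (Function.update σ (n + 1) s)) :=
        (measure_mono hcover).trans (measure_biUnion_finset_le _ _)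
    _ ≤ B.card • μ (goodSet ℓ c F (n + 1) (Function.update σ (n + 1) s)) :=
        Finset.sum_le_card_nsmul _ _ _ hmax
    _ = _ := by rw [nsmul_eq_mul]

/-- selection of sets on which the word length is almost additive along the
alternating products `g₁σ₁g₂σ₂⋯g_{k-1}σ_{k-1}g_k`. -/
theorem selection_lemma
    {G : Type*} [Group G] [Countable G] [MeasurableSpace G] [MeasurableSingletonClass G]
    -- `T` is a symmetric generating set of `G`
    (T : Set G) (hTsym : ∀ t ∈ T, t⁻¹ ∈ T) (hTgen : Subgroup.closure T = ⊤)
    -- `ℓ` is the word length associated with `T`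
    (ℓ : G → ℕ)
    (hℓ : ∀ g : G, ℓ g = sInf {n : ℕ | ∃ l : List G, l.length = n ∧ (∀ x ∈ l, x ∈ T) ∧ l.prod = g})
    -- bounded distortion hypothesis: `c > 0`, `B ⊆ G` finite, and for all `x y` there is
    -- `σ ∈ B` with `ℓ(xσy) ≥ ℓ(x) + ℓ(y) - c`
    (c : ℝ) (hc : 0 < c) (B : Finset G)
    (hdist : ∀ x y : G, ∃ σ ∈ B, (ℓ x : ℝ) + (ℓ y : ℝ) - c ≤ (ℓ (x * σ * y) : ℝ))
    (F : Set G) (ν : Measure G) [IsProbabilityMeasure ν] (hνF : ν F = 1) :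
    ∃ σ : ℕ → G, (∀ i, σ i ∈ B) ∧
      ∀ k : ℕ, 2 ≤ k → ∃ E : Set (Fin k → G),
        -- `E ⊆ F^k`
        (∀ g ∈ E, ∀ i, g i ∈ F) ∧
        -- almost additivity: `ℓ(g₁σ₁⋯σ_{k-1}g_k) ≥ ℓ(g₁) + ⋯ + ℓ(g_k) - (k-1)c`
        (∀ g ∈ E,
          (∑ i, (ℓ (g i) : ℝ)) - ((k : ℝ) - 1) * c ≤ (ℓ (altProdFrom σ 1 (List.ofFn g)) : ℝ)) ∧
        -- `ν^k(E) ≥ |B|^{-(k-1)}`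
        ((B.card : ℝ≥0∞))⁻¹ ^ (k - 1) ≤ Measure.pi (fun _ : Fin k => ν) E := by
  classical
  choose! s hsB hs using exists_step ℓ c B hdist F ν hνF
  obtain ⟨b, hb, -⟩ := hdist 1 1
  -- `u n` has its entries `1, …, n` chosen greedily.
  let u : ℕ → ℕ → G := fun n =>
    Nat.rec (fun _ => b) (fun n v => Function.update v (n + 1) (s n v)) n
  have hu : ∀ n, u (n + 1) = Function.update (u n) (n + 1) (s n (u n)) := fun _ => rfl
  have huB : ∀ n i, u n i ∈ B := by
    intro n
    induction n with
    | zero => exact fun _ => hb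
    | succ n ih =>
      intro i
      rw [hu]
      by_cases h : i = n + 1
      · subst h
        rw [Function.update_self]
        exact hsB _ _
      · rw [Function.update_of_ne h]
        exact ih i
  have hstable : ∀ n j, j ≤ n → u j j = u n j := by
    intro n j hj
    induction n, hj using Nat.le_induction with
    | base => rfl
    | succ n hn ih => rw [hu, Function.update_of_ne (by omega), ih]
  have hmeas : ∀ n, (B.card : ℝ≥0∞)⁻¹ ^ n
      ≤ Measure.pi (fun _ : Fin (n + 1) => ν) (goodSet ℓ c F n (u n)) := by
    intro n
    induction n with
    | zero =>
      have : goodSet ℓ c F 0 (u 0) = Set.univ.pi fun _ => F := by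
        ext g
        simp [goodSet, altProdFrom]
      rw [this, Measure.pi_pi]
      simp [hνF]
    | succ n ih =>
      rw [pow_succ', hu]
      exact (mul_le_mul_right ih _).trans (hs n (u n))
  refine ⟨fun i => u i i, fun i => huB i i, fun k hk => ?_⟩
  obtain ⟨n, rfl⟩ : ∃ n, k = n + 1 := ⟨k - 1, by omega⟩
  refine ⟨goodSet ℓ c F n fun i => u i i, fun g hg => hg.1, fun g hg => ?_, ?_⟩
  · have := hg.2
    push_cast
    rwa [add_sub_cancel_right]
  · rw [goodSet_congr ℓ c F n _ (u n) fun j hj => hstable n j hj]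
    exact hmeas n
end

section
/- Let X be a Hausdorff regular topological space and (ν_n)_{n≥1} a sequence of Borel probability measures on X. Define I : X → [0,∞] by I(x) = sup{ −liminf_{n→∞} (1/n) log ν_n(V) : V ⊆ X open, x ∈ V }, and assume that for every x ∈ X one also has I(x) = sup{ −limsup_{n→∞} (1/n) log ν_n(V) : V ⊆ X open, x ∈ V }. Then (ν_n)_{n≥1} satisfies the weak large deviation principle with rate function I: for every open set U ⊆ X, liminf_{n→∞} (1/n) log ν_n(U) ≥ −inf_U I, and for every compact set K ⊆ X, limsup_{n→∞} (1/n) log ν_n(K) ≤ −inf_K I. -/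
/-!
The lower bound is immediate: an open set `U` is itself one of the neighbourhoods defining `I x`
for each `x ∈ U`, so `-liminf (1/n) log ν_n(U) ≤ I x`.

For the upper bound, fix `a < inf_K I`. Since `I x` is also the supremum of
`-limsup (1/n) log ν_n(V)` over the open `V ∋ x`, each point of `K` has a neighbourhood with
`limsup ≤ -a`. This bound is inherited by subsets and by finite unions, because the exponential
growth rate of a sum is the maximum of the growth rates (`ExpGrowth.expGrowthSup_add`), so
compactness gives it for `K`. Letting `a` increase to `inf_K I` finishes the proof.
-/

open MeasureTheory Filter Topology
open scoped ENNReal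

/-- `(1/n) log ν_n(A)`, with the convention `log 0 = -∞` (values in `EReal`). -/
noncomputable def expRateOf {X : Type*} [MeasurableSpace X] (ν : ℕ → Measure X) (A : Set X)
    (n : ℕ) : EReal :=
  (((n : ℝ)⁻¹ : ℝ) : EReal) * ENNReal.log (ν n A)

/-- The function `I(x) = sup { - liminf_n (1/n) log ν_n(V) : V open, x ∈ V }`. -/
noncomputable def rateOf {X : Type*} [TopologicalSpace X] [MeasurableSpace X]
    (ν : ℕ → Measure X) (x : X) : EReal :=
  ⨆ V ∈ {V : Set X | IsOpen V ∧ x ∈ V}, - Filter.liminf (expRateOf ν V) Filter.atTop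

/-- The upper rate is Mathlib's `expGrowthSup`. Only the order of the factors differs: dividing by
`n` in `EReal` is multiplying by the inverse, also at `n = 0`. -/
lemma limsup_expRateOf_eq_expGrowthSup {X : Type*} [MeasurableSpace X] (ν : ℕ → Measure X)
    (A : Set X) :
    Filter.limsup (expRateOf ν A) Filter.atTop = ExpGrowth.expGrowthSup (fun n => ν n A) := by
  unfold ExpGrowth.expGrowthSup
  congr 1
  funext n
  rw [expRateOf, EReal.div_eq_inv_mul, EReal.coe_inv]
  rfl

/-- if the sup over open neighbourhoods of `- liminf` coincides everywhere with
the sup of `- limsup`, then the weak large deviation principle holds with rate function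
`I = rateOf ν`. -/
theorem weak_LDP_of_liminf_eq_limsup
    {X : Type*} [TopologicalSpace X] [T2Space X] [RegularSpace X]
    [MeasurableSpace X] [BorelSpace X]
    (ν : ℕ → Measure X) (hprob : ∀ n, IsProbabilityMeasure (ν n))
    (heq : ∀ x : X, rateOf ν x =
      ⨆ V ∈ {V : Set X | IsOpen V ∧ x ∈ V}, - Filter.limsup (expRateOf ν V) Filter.atTop) :
    -- lower bound for open sets
    (∀ U : Set X, IsOpen U →
      -(⨅ x ∈ U, rateOf ν x) ≤ Filter.liminf (expRateOf ν U) Filter.atTop) ∧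
    -- upper bound for compact sets
    (∀ K : Set X, IsCompact K →
      Filter.limsup (expRateOf ν K) Filter.atTop ≤ -(⨅ x ∈ K, rateOf ν x)) := by
  refine ⟨fun U hU => ?_, fun K hK => ?_⟩
  · rw [EReal.neg_le]
    exact le_iInf₂ fun x hx => le_iSup₂_of_le (f := fun V
      (_ : V ∈ {V : Set X | IsOpen V ∧ x ∈ V}) => - Filter.liminf (expRateOf ν V) Filter.atTop)
      U ⟨hU, hx⟩ le_rfl
  · rw [EReal.le_neg]
    refine le_of_forall_lt fun a ha => ?_
    obtain ⟨b, hab, hb⟩ := exists_between ha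
    refine hab.trans_le ?_
    rw [EReal.le_neg, limsup_expRateOf_eq_expGrowthSup]
    refine hK.induction_on (p := fun s => ExpGrowth.expGrowthSup (fun n => ν n s) ≤ -b)
      ?_ ?_ ?_ ?_
    · simp only [measure_empty]
      exact ExpGrowth.expGrowthSup_zero.trans_le bot_le
    · exact fun s t hst ht =>
        (ExpGrowth.expGrowthSup_monotone fun n => measure_mono hst).trans ht
    · exact fun s t hs ht =>
        (ExpGrowth.expGrowthSup_monotone fun n => measure_union_le s t).trans
          (ExpGrowth.expGrowthSup_add.trans_le (sup_le hs ht))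
    · intro x hx
      have hbx : b < rateOf ν x := hb.trans_le (iInf₂_le x hx)
      rw [heq x] at hbx
      obtain ⟨V, hV⟩ := lt_iSup_iff.1 hbx
      obtain ⟨⟨hVo, hxV⟩, hV⟩ := lt_iSup_iff.1 hV
      rw [limsup_expRateOf_eq_expGrowthSup] at hV
      exact ⟨V, mem_nhdsWithin_of_mem_nhds (hVo.mem_nhds hxV), EReal.le_neg.1 hV.le⟩
end
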